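/- Let λ ∈ G = ℂ \ (σ(T₁) ∪ σ(T₂)). The homogeneous integral equation f − (1/λ²)·W₁(1/λ)f = 0 has a nontrivial solution f ∈ H, f ≠ 0, if and only if Δ(λ) = 0. -/

import Mathlib

open MeasureTheory Complex

noncomputable section

/-- The measure on `ℝ` given by restricting Lebesgue measure to `[a,b]`. -/
abbrev muI (a b : ℝ) : MeasureTheory.Measure ℝ :=
  MeasureTheory.volume.restrict (Set.Icc a b)

section aux

set_option linter.unusedSectionVars false

variable {μ ν : Measure ℝ} [IsFiniteMeasure μ] [IsFiniteMeasure ν]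

lemma tmem {u v : ℝ → ℂ} (hu : MemLp u 2 μ) (hv : MemLp v 2 ν) :
    MemLp (fun z : ℝ × ℝ => u z.1 * v z.2) 2 (μ.prod ν) := by
  rw [memLp_two_iff_integrable_sq_norm]
  · have := ((memLp_two_iff_integrable_sq_norm hu.1).1 hu).mul_prod
      ((memLp_two_iff_integrable_sq_norm hv.1).1 hv)
    refine this.congr (Filter.Eventually.of_forall fun z => ?_)
    simp only [norm_mul, mul_pow]
  · exact (hu.1.comp_fst).mul (hv.1.comp_snd)

def tens {u v : ℝ → ℂ} (hu : MemLp u 2 μ) (hv : MemLp v 2 ν) : Lp ℂ 2 (μ.prod ν) :=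
  (tmem hu hv).toLp

lemma tens_ae {u v : ℝ → ℂ} (hu : MemLp u 2 μ) (hv : MemLp v 2 ν) :
    ∀ᵐ z ∂(μ.prod ν), tens hu hv z = u z.1 * v z.2 := (tmem hu hv).coeFn_toLp

lemma ae_fst {Q : ℝ × ℝ → Prop} (hQ : ∀ᵐ z ∂(μ.prod ν), Q z) :
    ∀ᵐ z ∂(μ.prod ν), ∀ᵐ t ∂ν, Q (z.1, t) :=
  Measure.quasiMeasurePreserving_fst.ae (Measure.ae_ae_of_ae_prod hQ)

lemma ae_snd {Q : ℝ × ℝ → Prop} (hQ : ∀ᵐ z ∂(μ.prod ν), Q z) :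
    ∀ᵐ z ∂(μ.prod ν), ∀ᵐ s ∂μ, Q (s, z.2) := by
  have h1 : ∀ᵐ z ∂(ν.prod μ), Q z.swap :=
    (Measure.measurePreserving_swap).quasiMeasurePreserving.ae hQ
  exact Measure.quasiMeasurePreserving_snd.ae (Measure.ae_ae_of_ae_prod h1)

lemma inner_tens {u v : ℝ → ℂ} (hu : MemLp u 2 μ) (hv : MemLp v 2 ν) (f : Lp ℂ 2 (μ.prod ν)) :
    inner ℂ (tens hu hv) f = ∫ z, star (u z.1) * star (v z.2) * f z ∂(μ.prod ν) := by
  rw [L2.inner_def]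
  refine integral_congr_ae ?_
  filter_upwards [tens_ae hu hv] with z hz
  rw [hz]
  simp [mul_comm]

lemma inner_integrable {u v : ℝ → ℂ} (hu : MemLp u 2 μ) (hv : MemLp v 2 ν)
    (f : Lp ℂ 2 (μ.prod ν)) :
    Integrable (fun z => star (u z.1) * star (v z.2) * f z) (μ.prod ν) := by
  have h1 := (tmem hu hv).star.integrable_mul (Lp.memLp f)
  refine h1.congr (Filter.Eventually.of_forall fun z => ?_)
  simp [mul_comm]

lemma inner_tens_tens {u v u' v' : ℝ → ℂ} (hu : MemLp u 2 μ) (hv : MemLp v 2 ν)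
    (hu' : MemLp u' 2 μ) (hv' : MemLp v' 2 ν) :
    inner ℂ (tens hu hv) (tens hu' hv') =
      (∫ x, star (u x) * u' x ∂μ) * ∫ y, star (v y) * v' y ∂ν := by
  rw [inner_tens, ← integral_prod_mul]
  refine integral_congr_ae ?_
  filter_upwards [tens_ae hu' hv'] with z hz
  rw [hz]
  ring

lemma int_star_self (v : ℝ → ℂ) :
    ∫ y, star (v y) * v y ∂ν = ((∫ y, ‖v y‖ ^ 2 ∂ν : ℝ) : ℂ) := by
  refine Eq.trans ?_ integral_ofReal
  refine integral_congr_ae (Filter.Eventually.of_forall fun y => ?_)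
  simpa using Complex.conj_mul' (v y)

lemma norm_tens {u v : ℝ → ℂ} (hu : MemLp u 2 μ) (hv : MemLp v 2 ν) :
    ‖tens hu hv‖ ^ 2 = (∫ x, ‖u x‖ ^ 2 ∂μ) * ∫ y, ‖v y‖ ^ 2 ∂ν := by
  have h1 := inner_tens_tens hu hv hu hv
  rw [int_star_self, int_star_self, inner_self_eq_norm_sq_to_K] at h1
  refine Complex.ofReal_injective ?_
  push_cast
  exact h1

lemma bmul {q u : ℝ → ℂ} (hq : AEStronglyMeasurable q μ) {C : ℝ} (hC : ∀ᵐ x ∂μ, ‖q x‖ ≤ C)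
    (hu : MemLp u 2 μ) : MemLp (fun x => q x * u x) 2 μ := by
  refine MemLp.of_le_mul (c := C) hu (hq.mul hu.1) ?_
  filter_upwards [hC] with x hx
  rw [norm_mul]
  exact mul_le_mul_of_nonneg_right hx (norm_nonneg _)

lemma ess_lower {q : ℝ → ℝ} (hq : Measurable q) (lam : ℂ) {δ : ℝ} (hδ : 0 < δ)
    (hyp : ∀ A : Set ℝ, MeasurableSet A →
      δ ^ 2 * ∫ y, ‖A.indicator (fun _ => (1 : ℂ)) y‖ ^ 2 ∂ν ≤
        ∫ y, ‖(lam - (q y : ℂ)) * A.indicator (fun _ => (1 : ℂ)) y‖ ^ 2 ∂ν) :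
    ∀ᵐ y ∂ν, δ / 2 ≤ ‖lam - (q y : ℂ)‖ := by
  set A : Set ℝ := {y | ‖lam - (q y : ℂ)‖ < δ / 2} with hA
  have hAm : MeasurableSet A := measurableSet_lt (by fun_prop) measurable_const
  have h1 := hyp A hAm
  have e1 : ∀ y, ‖A.indicator (fun _ => (1 : ℂ)) y‖ ^ 2 = A.indicator (fun _ => (1 : ℝ)) y := by
    intro y; by_cases hy : y ∈ A <;> simp [hy]
  have h2 : ∫ y, ‖(lam - (q y : ℂ)) * A.indicator (fun _ => (1 : ℂ)) y‖ ^ 2 ∂ν ≤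
      ∫ y, A.indicator (fun _ => (δ / 2) ^ 2) y ∂ν := by
    refine integral_mono_of_nonneg (Filter.Eventually.of_forall fun y => by positivity)
      ((integrable_const _).indicator hAm) (Filter.Eventually.of_forall fun y => ?_)
    by_cases hy : y ∈ A
    · have : ‖lam - (q y : ℂ)‖ < δ / 2 := hy
      simp only [hy, Set.indicator_of_mem, mul_one]
      gcongr
    · simp [hy]
  simp_rw [e1] at h1
  rw [integral_indicator_const _ hAm] at h1 h2
  simp only [smul_eq_mul] at h1 h2
  have h3 : ν.real A = 0 := by
    have h0 : 0 ≤ ν.real A := measureReal_nonneg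
    nlinarith [sq_nonneg δ, pow_pos hδ 2, mul_nonneg (sq_nonneg δ) h0]
  rw [measureReal_eq_zero_iff] at h3
  have := measure_eq_zero_iff_ae_notMem.1 h3
  filter_upwards [this] with y hy
  exact not_lt.1 hy

lemma lower_of_spec {E : Type*} [NormedAddCommGroup E] [NormedSpace ℂ E]
    {T : E →L[ℂ] E} {lam : ℂ} (hl : lam ∉ spectrum ℂ T) :
    ∃ δ : ℝ, 0 < δ ∧ ∀ f, δ * ‖f‖ ≤ ‖lam • f - T f‖ := by
  rw [spectrum.notMem_iff] at hl
  obtain ⟨R, hR⟩ := hl.exists_left_inv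
  refine ⟨(‖R‖ + 1)⁻¹, by positivity, fun f => ?_⟩
  have h1 : R (lam • f - T f) = f := by
    have := congrArg (fun L : E →L[ℂ] E => L f) hR
    simpa [Algebra.algebraMap_eq_smul_one] using this
  have h2 : ‖f‖ ≤ (‖R‖ + 1) * ‖lam • f - T f‖ := by
    calc ‖f‖ = ‖R (lam • f - T f)‖ := by rw [h1]
      _ ≤ ‖R‖ * ‖lam • f - T f‖ := R.le_opNorm _
      _ ≤ _ := by gcongr; linarith
  rw [inv_mul_le_iff₀ (by positivity)]
  exact h2

lemma T1_tens {n : ℕ} {φ : Fin n → ℝ → ℂ} (hφ : ∀ k, MemLp (φ k) 2 μ) {h : Fin n → ℝ → ℝ}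
    {T1 : Lp ℂ 2 (μ.prod ν) →L[ℂ] Lp ℂ 2 (μ.prod ν)}
    (hT1 : ∀ f : Lp ℂ 2 (μ.prod ν), ∀ᵐ z ∂(μ.prod ν),
        T1 f z = ∫ s, (∑ k, φ k z.1 * star (φ k s) * (h k z.2 : ℂ)) * f (s, z.2) ∂μ)
    {u v : ℝ → ℂ} (hu : MemLp u 2 μ) (hv : MemLp v 2 ν) :
    ∀ᵐ z ∂(μ.prod ν), T1 (tens hu hv) z =
      ∑ k, (∫ s, star (φ k s) * u s ∂μ) * (φ k z.1 * (h k z.2 * v z.2)) := by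
  filter_upwards [hT1 (tens hu hv), ae_snd (tens_ae hu hv)] with z hz h2
  rw [hz]
  have : ∀ k, Integrable (fun s => star (φ k s) * u s) μ := fun k =>
    (hφ k).star.integrable_mul hu
  calc _ = ∫ s, ∑ k, (star (φ k s) * u s) * (φ k z.1 * (h k z.2 * v z.2)) ∂μ := by
        refine integral_congr_ae ?_
        filter_upwards [h2] with s hs
        rw [hs, Finset.sum_mul]
        refine Finset.sum_congr rfl fun k _ => ?_
        ring
    _ = _ := by
        rw [integral_finsetSum _ fun k _ => (this k).mul_const _]
        simp_rw [integral_mul_const]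

lemma T2_tens {m : ℕ} {ψ : Fin m → ℝ → ℂ} (hψ : ∀ k, MemLp (ψ k) 2 ν) {p : Fin m → ℝ → ℝ}
    {T2 : Lp ℂ 2 (μ.prod ν) →L[ℂ] Lp ℂ 2 (μ.prod ν)}
    (hT2 : ∀ f : Lp ℂ 2 (μ.prod ν), ∀ᵐ z ∂(μ.prod ν),
        T2 f z = ∫ t, (∑ j, (p j z.1 : ℂ) * ψ j z.2 * star (ψ j t)) * f (z.1, t) ∂ν)
    {u v : ℝ → ℂ} (hu : MemLp u 2 μ) (hv : MemLp v 2 ν) :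
    ∀ᵐ z ∂(μ.prod ν), T2 (tens hu hv) z =
      ∑ k, (∫ t, star (ψ k t) * v t ∂ν) * ((p k z.1 * u z.1) * ψ k z.2) := by
  filter_upwards [hT2 (tens hu hv), ae_fst (tens_ae hu hv)] with z hz h2
  rw [hz]
  have : ∀ k, Integrable (fun s => star (ψ k s) * v s) ν := fun k =>
    (hψ k).star.integrable_mul hv
  calc _ = ∫ s, ∑ k, (star (ψ k s) * v s) * ((p k z.1 * u z.1) * ψ k z.2) ∂ν := by
        refine integral_congr_ae ?_
        filter_upwards [h2] with s hs
        rw [hs, Finset.sum_mul]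
        refine Finset.sum_congr rfl fun k _ => ?_
        ring
    _ = _ := by
        rw [integral_finsetSum _ fun k _ => (this k).mul_const _]
        simp_rw [integral_mul_const]

/-- essential lower bound for `lam - h j` -/
lemma h_lower {n : ℕ} {φ : Fin n → ℝ → ℂ} (hφ : ∀ k, MemLp (φ k) 2 μ)
    (hφON : ∀ i j, ∫ x, star (φ i x) * φ j x ∂μ = if i = j then 1 else 0) {h : Fin n → ℝ → ℝ}
    (hhm : ∀ k, Measurable (h k)) (hhb : ∀ k, ∃ C : ℝ, ∀ᵐ y ∂ν, |h k y| ≤ C)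
    {T1 : Lp ℂ 2 (μ.prod ν) →L[ℂ] Lp ℂ 2 (μ.prod ν)}
    (hT1 : ∀ f : Lp ℂ 2 (μ.prod ν), ∀ᵐ z ∂(μ.prod ν),
        T1 f z = ∫ s, (∑ k, φ k z.1 * star (φ k s) * (h k z.2 : ℂ)) * f (s, z.2) ∂μ)
    {lam : ℂ} (hl : lam ∉ spectrum ℂ T1) (j : Fin n) :
    ∃ δ : ℝ, 0 < δ ∧ ∀ᵐ y ∂ν, δ ≤ ‖lam - (h j y : ℂ)‖ := by
  obtain ⟨δ, hδ, hT⟩ := lower_of_spec hl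
  refine ⟨δ / 2, by positivity, ess_lower (hhm j) lam hδ fun A hA => ?_⟩
  have hg : MemLp (A.indicator (fun _ => (1 : ℂ))) 2 ν := (memLp_const 1).indicator hA
  obtain ⟨C, hC⟩ := hhb j
  have hg' : MemLp (fun y => (lam - (h j y : ℂ)) * A.indicator (fun _ => (1 : ℂ)) y) 2 ν := by
    have := hhm j
    refine bmul (C := ‖lam‖ + C) (by fun_prop) ?_ hg
    filter_upwards [hC] with y hy
    refine (norm_sub_le _ _).trans ?_
    simpa using hy
  have e : lam • tens (hφ j) hg - T1 (tens (hφ j) hg) = tens (hφ j) hg' := by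
    refine Lp.ext ?_
    filter_upwards [Lp.coeFn_sub (lam • tens (hφ j) hg) (T1 (tens (hφ j) hg)),
      Lp.coeFn_smul lam (tens (hφ j) hg), tens_ae (hφ j) hg, tens_ae (hφ j) hg',
      T1_tens hφ hT1 (hφ j) hg] with z h1 h2 h3 h4 h5
    rw [h1, Pi.sub_apply, h2, Pi.smul_apply, h3, h4, h5]
    simp only [hφON, smul_eq_mul, ite_mul, one_mul, zero_mul, Finset.sum_ite_eq', Finset.mem_univ,
      if_true]
    ring
  have h1 := hT (tens (hφ j) hg)
  rw [e] at h1
  have h2 : (δ * ‖tens (hφ j) hg‖) ^ 2 ≤ ‖tens (hφ j) hg'‖ ^ 2 := by gcongr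
  have h3 : ∫ x, ‖φ j x‖ ^ 2 ∂μ = 1 := by
    have := hφON j j
    rw [int_star_self] at this
    simpa using this
  rw [mul_pow, norm_tens, norm_tens, h3, one_mul, one_mul] at h2
  exact h2

/-- essential lower bound for `lam - p j` -/
lemma p_lower {m : ℕ} {ψ : Fin m → ℝ → ℂ} (hψ : ∀ k, MemLp (ψ k) 2 ν)
    (hψON : ∀ i j, ∫ x, star (ψ i x) * ψ j x ∂ν = if i = j then 1 else 0) {p : Fin m → ℝ → ℝ}
    (hpm : ∀ k, Measurable (p k)) (hpb : ∀ k, ∃ C : ℝ, ∀ᵐ y ∂μ, |p k y| ≤ C)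
    {T2 : Lp ℂ 2 (μ.prod ν) →L[ℂ] Lp ℂ 2 (μ.prod ν)}
    (hT2 : ∀ f : Lp ℂ 2 (μ.prod ν), ∀ᵐ z ∂(μ.prod ν),
        T2 f z = ∫ t, (∑ j, (p j z.1 : ℂ) * ψ j z.2 * star (ψ j t)) * f (z.1, t) ∂ν)
    {lam : ℂ} (hl : lam ∉ spectrum ℂ T2) (j : Fin m) :
    ∃ δ : ℝ, 0 < δ ∧ ∀ᵐ y ∂μ, δ ≤ ‖lam - (p j y : ℂ)‖ := by
  obtain ⟨δ, hδ, hT⟩ := lower_of_spec hl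
  refine ⟨δ / 2, by positivity, ess_lower (hpm j) lam hδ fun A hA => ?_⟩
  have hg : MemLp (A.indicator (fun _ => (1 : ℂ))) 2 μ := (memLp_const 1).indicator hA
  obtain ⟨C, hC⟩ := hpb j
  have hg' : MemLp (fun y => (lam - (p j y : ℂ)) * A.indicator (fun _ => (1 : ℂ)) y) 2 μ := by
    have := hpm j
    refine bmul (C := ‖lam‖ + C) (by fun_prop) ?_ hg
    filter_upwards [hC] with y hy
    refine (norm_sub_le _ _).trans ?_
    simpa using hy
  have e : lam • tens hg (hψ j) - T2 (tens hg (hψ j)) = tens hg' (hψ j) := by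
    refine Lp.ext ?_
    filter_upwards [Lp.coeFn_sub (lam • tens hg (hψ j)) (T2 (tens hg (hψ j))),
      Lp.coeFn_smul lam (tens hg (hψ j)), tens_ae hg (hψ j), tens_ae hg' (hψ j),
      T2_tens hψ hT2 hg (hψ j)] with z h1 h2 h3 h4 h5
    rw [h1, Pi.sub_apply, h2, Pi.smul_apply, h3, h4, h5]
    simp only [hψON, smul_eq_mul, ite_mul, one_mul, zero_mul, Finset.sum_ite_eq', Finset.mem_univ,
      if_true]
    ring
  have h1 := hT (tens hg (hψ j))
  rw [e] at h1
  have h2 : (δ * ‖tens hg (hψ j)‖) ^ 2 ≤ ‖tens hg' (hψ j)‖ ^ 2 := by gcongr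
  have h3 : ∫ x, ‖ψ j x‖ ^ 2 ∂ν = 1 := by
    have := hψON j j
    rw [int_star_self] at this
    simpa using this
  rw [mul_pow, norm_tens, norm_tens, h3, mul_one, mul_one] at h2
  exact h2


lemma T2_split {m : ℕ} {ψ : Fin m → ℝ → ℂ} (hψ : ∀ k, MemLp (ψ k) 2 ν) {p : Fin m → ℝ → ℝ}
    {T2 : Lp ℂ 2 (μ.prod ν) →L[ℂ] Lp ℂ 2 (μ.prod ν)}
    (hT2 : ∀ f : Lp ℂ 2 (μ.prod ν), ∀ᵐ z ∂(μ.prod ν),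
        T2 f z = ∫ t, (∑ j, (p j z.1 : ℂ) * ψ j z.2 * star (ψ j t)) * f (z.1, t) ∂ν)
    (f : Lp ℂ 2 (μ.prod ν)) :
    ∀ᵐ z ∂(μ.prod ν), T2 f z =
      ∑ j, (p j z.1 : ℂ) * ψ j z.2 * ∫ t, star (ψ j t) * f (z.1, t) ∂ν := by
  have h1 : ∀ᵐ z ∂(μ.prod ν), ∀ j, Integrable (fun t => star (ψ j t) * f (z.1, t)) ν := by
    rw [ae_all_iff]
    intro j
    have h0 := inner_integrable (μ := μ) (memLp_const (1 : ℂ)) (hψ j) f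
    have h2 := Measure.quasiMeasurePreserving_fst (μ := μ) (ν := ν) |>.ae h0.prod_right_ae
    filter_upwards [h2] with z hz
    simpa using hz
  filter_upwards [hT2 f, h1] with z hz h1
  rw [hz]
  calc _ = ∫ t, ∑ j, (p j z.1 : ℂ) * ψ j z.2 * (star (ψ j t) * f (z.1, t)) ∂ν := by
        refine integral_congr_ae (Filter.Eventually.of_forall fun t => ?_)
        simp only [Finset.sum_mul, mul_assoc]
    _ = _ := by
        rw [integral_finsetSum _ fun k _ => (h1 k).const_mul _]
        simp_rw [integral_const_mul]

lemma PT2 {m : ℕ} {ψ : Fin m → ℝ → ℂ} (hψ : ∀ k, MemLp (ψ k) 2 ν) {p : Fin m → ℝ → ℝ}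
    {T2 : Lp ℂ 2 (μ.prod ν) →L[ℂ] Lp ℂ 2 (μ.prod ν)}
    (hT2 : ∀ f : Lp ℂ 2 (μ.prod ν), ∀ᵐ z ∂(μ.prod ν),
        T2 f z = ∫ t, (∑ j, (p j z.1 : ℂ) * ψ j z.2 * star (ψ j t)) * f (z.1, t) ∂ν)
    {φ : ℝ → ℂ} (hpφ : ∀ j, MemLp (fun x => (p j x : ℂ) * φ x) 2 μ)
    {P : Lp ℂ 2 (μ.prod ν) →L[ℂ] Lp ℂ 2 (μ.prod ν)}
    (hP : ∀ f : Lp ℂ 2 (μ.prod ν), ∀ᵐ z ∂(μ.prod ν),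
        P f z = φ z.1 * ∫ s, star (φ s) * f (s, z.2) ∂μ)
    (f : Lp ℂ 2 (μ.prod ν)) :
    ∀ᵐ z ∂(μ.prod ν), P (T2 f) z =
      ∑ j, inner ℂ (tens (hpφ j) (hψ j)) f * (φ z.1 * ψ j z.2) := by
  have e : ∀ j, (fun s => ∫ t, star ((p j s : ℂ) * φ s) * star (ψ j t) * f (s, t) ∂ν) =
      fun s => star (φ s) * (p j s : ℂ) * ∫ t, star (ψ j t) * f (s, t) ∂ν := by
    intro j
    funext s
    rw [← integral_const_mul]
    refine integral_congr_ae (Filter.Eventually.of_forall fun t => ?_)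
    simp
    ring
  have hi : ∀ j, inner ℂ (tens (hpφ j) (hψ j)) f =
      ∫ s, star (φ s) * (p j s : ℂ) * ∫ t, star (ψ j t) * f (s, t) ∂ν ∂μ := by
    intro j
    rw [inner_tens, integral_prod _ (inner_integrable (hpφ j) (hψ j) f), e]
  have hI : ∀ j, Integrable
      (fun s => star (φ s) * (p j s : ℂ) * ∫ t, star (ψ j t) * f (s, t) ∂ν) μ := by
    intro j
    have := (inner_integrable (hpφ j) (hψ j) f).integral_prod_left
    rwa [e] at this
  filter_upwards [hP (T2 f), ae_snd (T2_split hψ hT2 f)] with z hz h2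
  rw [hz]
  have : ∫ s, star (φ s) * T2 f (s, z.2) ∂μ =
      ∑ j, (∫ s, star (φ s) * (p j s : ℂ) * ∫ t, star (ψ j t) * f (s, t) ∂ν ∂μ) * ψ j z.2 := by
    calc _ = ∫ s, ∑ j, (star (φ s) * (p j s : ℂ) * ∫ t, star (ψ j t) * f (s, t) ∂ν) * ψ j z.2 ∂μ := by
          refine integral_congr_ae ?_
          filter_upwards [h2] with s hs
          rw [hs, Finset.mul_sum]
          refine Finset.sum_congr rfl fun j _ => ?_
          ring
      _ = _ := by
          rw [integral_finsetSum _ fun k _ => (hI k).mul_const _]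
          simp_rw [integral_mul_const]
  rw [this, Finset.mul_sum]
  refine Finset.sum_congr rfl fun j _ => ?_
  rw [hi]
  ring

lemma lp_sum {α ι : Type*} [MeasurableSpace α] {ρ : Measure α} (s : Finset ι) (f : ι → Lp ℂ 2 ρ) :
    ∀ᵐ z ∂ρ, (∑ i ∈ s, f i : Lp ℂ 2 ρ) z = ∑ i ∈ s, f i z := by
  classical
  induction s using Finset.induction_on with
  | empty =>
    filter_upwards [Lp.coeFn_zero ℂ 2 ρ] with z hz
    simpa using hz
  | insert i s hi ih =>
    rw [Finset.sum_insert hi]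
    filter_upwards [Lp.coeFn_add (f i) (∑ i ∈ s, f i), ih] with z h1 h2
    rw [h1, Pi.add_apply, h2, Finset.sum_insert hi]

lemma lp_sum_smul {α ι : Type*} [MeasurableSpace α] {ρ : Measure α} [Fintype ι]
    (c : ι → ℂ) (f : ι → Lp ℂ 2 ρ) :
    ∀ᵐ z ∂ρ, (∑ i, c i • f i : Lp ℂ 2 ρ) z = ∑ i, c i * f i z := by
  have h2 : ∀ᵐ z ∂ρ, ∀ i, (c i • f i : Lp ℂ 2 ρ) z = c i * f i z := by
    rw [ae_all_iff]
    intro i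
    filter_upwards [Lp.coeFn_smul (c i) (f i)] with z hz
    rw [hz]; rfl
  filter_upwards [lp_sum Finset.univ (fun i => c i • f i), h2] with z h1 h2
  rw [h1]
  exact Finset.sum_congr rfl fun i _ => h2 i

lemma T2_tens_eq {m : ℕ} {ψ : Fin m → ℝ → ℂ} (hψ : ∀ k, MemLp (ψ k) 2 ν) {p : Fin m → ℝ → ℝ}
    {T2 : Lp ℂ 2 (μ.prod ν) →L[ℂ] Lp ℂ 2 (μ.prod ν)}
    (hT2 : ∀ f : Lp ℂ 2 (μ.prod ν), ∀ᵐ z ∂(μ.prod ν),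
        T2 f z = ∫ t, (∑ j, (p j z.1 : ℂ) * ψ j z.2 * star (ψ j t)) * f (z.1, t) ∂ν)
    {u v : ℝ → ℂ} (hu : MemLp u 2 μ) (hv : MemLp v 2 ν)
    (hpu : ∀ k, MemLp (fun x => (p k x : ℂ) * u x) 2 μ) :
    T2 (tens hu hv) = ∑ k, (∫ t, star (ψ k t) * v t ∂ν) • tens (hpu k) (hψ k) := by
  refine Lp.ext ?_
  have h3 : ∀ᵐ z ∂(μ.prod ν), ∀ k, tens (hpu k) (hψ k) z = (p k z.1 * u z.1) * ψ k z.2 := by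
    rw [ae_all_iff]
    exact fun k => tens_ae _ _
  filter_upwards [T2_tens hψ hT2 hu hv, h3,
    lp_sum_smul (fun k => ∫ t, star (ψ k t) * v t ∂ν) (fun k => tens (hpu k) (hψ k))] with z h1 h2 h3
  rw [h1, h3]
  simp_rw [h2]

lemma F_eq {m : ℕ} {ψ : Fin m → ℝ → ℂ} (hψ : ∀ k, MemLp (ψ k) 2 ν)
    (hψON : ∀ i j, ∫ x, star (ψ i x) * ψ j x ∂ν = if i = j then 1 else 0) {p : Fin m → ℝ → ℝ}
    {T2 : Lp ℂ 2 (μ.prod ν) →L[ℂ] Lp ℂ 2 (μ.prod ν)}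
    (hT2 : ∀ f : Lp ℂ 2 (μ.prod ν), ∀ᵐ z ∂(μ.prod ν),
        T2 f z = ∫ t, (∑ j, (p j z.1 : ℂ) * ψ j z.2 * star (ψ j t)) * f (z.1, t) ∂ν)
    {lam : ℂ} (hne : ∀ j, ∀ᵐ x ∂μ, lam - (p j x : ℂ) ≠ 0)
    (hpmul : ∀ j (u : ℝ → ℂ), MemLp u 2 μ → MemLp (fun x => (p j x : ℂ) * u x) 2 μ)
    {u v : ℝ → ℂ} (hu : MemLp u 2 μ) (hv : MemLp v 2 ν)
    (hr : ∀ j, MemLp (fun x => (p j x : ℂ) / (lam - p j x) * u x) 2 μ)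
    (FL : Lp ℂ 2 (μ.prod ν))
    (hFL : FL = tens hu hv + ∑ i, (∫ t, star (ψ i t) * v t ∂ν) • tens (hr i) (hψ i)) :
    lam • FL - T2 FL = lam • tens hu hv := by
  have key : ∀ i, tens (hpmul i _ hu) (hψ i) + tens (hpmul i _ (hr i)) (hψ i) =
      lam • tens (hr i) (hψ i) := by
    intro i
    refine Lp.ext ?_
    filter_upwards [Lp.coeFn_add (tens (hpmul i _ hu) (hψ i)) (tens (hpmul i _ (hr i)) (hψ i)),
      Lp.coeFn_smul lam (tens (hr i) (hψ i)), tens_ae (hpmul i _ hu) (hψ i),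
      tens_ae (hpmul i _ (hr i)) (hψ i), tens_ae (hr i) (hψ i),
      Measure.quasiMeasurePreserving_fst.ae (hne i)] with z h1 h2 h3 h4 h5 h6
    rw [h1, h2, Pi.add_apply, Pi.smul_apply, h3, h4, h5, smul_eq_mul]
    field_simp
    ring
  have hT : T2 FL = ∑ i, (∫ t, star (ψ i t) * v t ∂ν) • lam • tens (hr i) (hψ i) := by
    rw [hFL, map_add, map_sum, T2_tens_eq hψ hT2 hu hv (fun k => hpmul k _ hu),
      ← Finset.sum_add_distrib]
    refine Finset.sum_congr rfl fun i _ => ?_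
    rw [map_smul, T2_tens_eq hψ hT2 (hr i) (hψ i) (fun k => hpmul k _ (hr i)), ← smul_add, ← key]
    congr 2
    simp_rw [hψON]
    simp
  rw [hT, hFL, smul_add, Finset.smul_sum, add_sub_assoc]
  simp_rw [smul_comm lam]
  simp

lemma final_alg {E Γ : Type*} [AddCommGroup E] [Module ℂ E] [Fintype Γ] [DecidableEq Γ]
    {lam : ℂ} (hl : lam ≠ 0) (β : Γ → E →ₗ[ℂ] ℂ) (F : Γ → E) (M : Γ → Γ → ℂ)
    (hM : ∀ ω ω', M ω ω' = β ω' (F ω)) :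
    (∃ f : E, f ≠ 0 ∧ lam • f = ∑ ω, β ω f • F ω) ↔
      Matrix.det (Matrix.of fun ω ω' => M ω ω' - if ω = ω' then lam else 0) = 0 := by
  rw [← Matrix.exists_vecMul_eq_zero_iff]
  have hv : ∀ c : Γ → ℂ, Matrix.vecMul c
      (Matrix.of fun ω ω' => M ω ω' - if ω = ω' then lam else 0) = 0 ↔
        ∀ ω', ∑ ω, c ω * M ω ω' = lam * c ω' := by
    intro c
    rw [funext_iff]
    refine forall_congr' fun ω' => ?_
    simp [Matrix.vecMul, dotProduct, mul_sub, Finset.sum_sub_distrib, sub_eq_zero, mul_comm]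
  constructor
  · rintro ⟨f, hf, he⟩
    refine ⟨fun ω => β ω f, fun h0 => ?_, (hv _).2 fun ω' => ?_⟩
    · have : ∀ ω, β ω f = 0 := fun ω => congrFun h0 ω
      simp only [this, zero_smul, Finset.sum_const_zero, smul_eq_zero] at he
      tauto
    · have := congrArg (β ω') he
      simp only [map_smul, map_sum, smul_eq_mul] at this
      rw [this]
      simp_rw [hM]
  · rintro ⟨c, hc, he⟩
    have he := (hv c).1 he
    have hb : ∀ ω', β ω' (∑ ω, c ω • F ω) = lam * c ω' := by
      intro ω'
      rw [← he]
      simp [hM]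
    refine ⟨∑ ω, c ω • F ω, fun h0 => ?_, ?_⟩
    · refine hc (funext fun ω => ?_)
      have := hb ω
      rw [h0, map_zero] at this
      have := (mul_eq_zero.1 this.symm).resolve_left hl
      simpa using this
    · simp_rw [hb, Finset.smul_sum, smul_smul]

lemma exists_orth {a b : ℝ} (hab : a < b) {n : ℕ} {φ : Fin n → ℝ → ℂ}
    (hφ : ∀ k, MemLp (φ k) 2 (muI a b)) :
    ∃ u : ℝ → ℂ, MemLp u 2 (muI a b) ∧ (∀ k, ∫ s, star (φ k s) * u s ∂(muI a b) = 0) ∧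
      ¬ (∀ᵐ x ∂(muI a b), u x = 0) := by
  have hmem : ∀ q : Polynomial ℂ, MemLp (fun x : ℝ => q.eval (x : ℂ)) 2 (muI a b) := by
    intro q
    have hc : Continuous (fun x : ℝ => q.eval (x : ℂ)) := by fun_prop
    obtain ⟨C, hC⟩ := isCompact_Icc.exists_bound_of_continuousOn (s := Set.Icc a b) hc.continuousOn
    refine MemLp.of_bound hc.aestronglyMeasurable C ?_
    exact (ae_restrict_iff' measurableSet_Icc).2 (Filter.Eventually.of_forall hC)
  let L : Polynomial.degreeLT ℂ (n + 1) →ₗ[ℂ] (Fin n → ℂ) :=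
    { toFun := fun q k => ∫ s, star (φ k s) * (q : Polynomial ℂ).eval (s : ℂ) ∂(muI a b)
      map_add' := by
        intro q r
        funext k
        simp only [Submodule.coe_add, Polynomial.eval_add, mul_add, Pi.add_apply]
        exact integral_add ((hφ k).star.integrable_mul (hmem q)) ((hφ k).star.integrable_mul (hmem r))
      map_smul' := by
        intro c q
        funext k
        simp only [Submodule.coe_smul, Polynomial.eval_smul, smul_eq_mul, RingHom.id_apply,
          Pi.smul_apply]
        rw [← integral_const_mul]
        refine integral_congr_ae (Filter.Eventually.of_forall fun t => ?_)
        simp only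
        ring }
  have hk : LinearMap.ker L ≠ ⊥ := by
    refine LinearMap.ker_ne_bot_of_finrank_lt ?_
    rw [(Polynomial.degreeLTEquiv ℂ (n + 1)).finrank_eq]
    simp
  obtain ⟨q, hq, hq0⟩ := Submodule.exists_mem_ne_zero_of_ne_bot hk
  refine ⟨fun x => (q : Polynomial ℂ).eval (x : ℂ), hmem q, fun k => congrFun hq k, fun h0 => ?_⟩
  have hqne : (q : Polynomial ℂ) ≠ 0 := fun h => hq0 (Subtype.ext h)
  have hfin : {x : ℝ | (q : Polynomial ℂ).eval (x : ℂ) = 0}.Finite := by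
    have := (q : Polynomial ℂ).finite_setOfPred_isRoot hqne
    exact this.preimage (f := fun x : ℝ => (x : ℂ)) Complex.ofReal_injective.injOn
  have h1 := (ae_restrict_iff' measurableSet_Icc).1 h0
  have h2 := measure_eq_zero_iff_ae_notMem.1 (hfin.measure_zero volume)
  have h3 : ∀ᵐ x : ℝ, x ∉ Set.Icc a b := by
    filter_upwards [h1, h2] with x h1 h2 hx
    exact h2 (h1 hx)
  have h4 := measure_eq_zero_iff_ae_notMem.2 h3
  rw [Real.volume_Icc] at h4
  simp at h4
  linarith

lemma lam_ne {a b c d : ℝ} (hab : a < b) (hcd : c < d)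
    {n : ℕ} {φ : Fin n → ℝ → ℂ} (hφ : ∀ k, MemLp (φ k) 2 (muI a b)) {h : Fin n → ℝ → ℝ}
    {T1 : Lp ℂ 2 ((muI a b).prod (muI c d)) →L[ℂ] Lp ℂ 2 ((muI a b).prod (muI c d))}
    (hT1 : ∀ f : Lp ℂ 2 ((muI a b).prod (muI c d)), ∀ᵐ z ∂((muI a b).prod (muI c d)),
        T1 f z = ∫ s, (∑ k, φ k z.1 * star (φ k s) * (h k z.2 : ℂ)) * f (s, z.2) ∂(muI a b))
    {lam : ℂ} (hl : lam ∉ spectrum ℂ T1) : lam ≠ 0 := by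
  rintro rfl
  obtain ⟨u, hu, ho, hn⟩ := exists_orth hab hφ
  obtain ⟨δ, hδ, hT⟩ := lower_of_spec hl
  have h1 : MemLp (fun _ : ℝ => (1 : ℂ)) 2 (muI c d) := memLp_const 1
  have hz : T1 (tens hu h1) = 0 := by
    refine Lp.ext ?_
    filter_upwards [T1_tens hφ hT1 hu h1, Lp.coeFn_zero ℂ 2 ((muI a b).prod (muI c d))] with z h1 h2
    rw [h1, h2]
    simp_rw [ho]
    simp
  have h2 := hT (tens hu h1)
  rw [hz] at h2
  simp only [zero_smul, sub_zero, norm_zero] at h2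
  have h3 : ‖tens hu h1‖ = 0 := by nlinarith [norm_nonneg (tens hu h1)]
  have h4 := norm_tens hu h1
  rw [h3] at h4
  have h5 : ∫ y, ‖(1 : ℂ)‖ ^ 2 ∂(muI c d) ≠ 0 := by
    simp
    linarith
  have h6 : ∫ x, ‖u x‖ ^ 2 ∂(muI a b) = 0 := by
    have : (∫ x, ‖u x‖ ^ 2 ∂(muI a b)) * ∫ y, ‖(1 : ℂ)‖ ^ 2 ∂(muI c d) = 0 := by
      rw [← h4]; simp
    exact (mul_eq_zero.1 this).resolve_right h5
  rw [integral_eq_zero_iff_of_nonneg (fun x => by positivity)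
    ((memLp_two_iff_integrable_sq_norm hu.1).1 hu)] at h6
  apply hn
  filter_upwards [h6] with x hx
  simpa using hx

end aux

theorem statement16
    (a b c d : ℝ) (hab : a < b) (hcd : c < d)
    (n : ℕ) (hn : 1 ≤ n)
    (φ : Fin n → ℝ → ℂ)
    (hφL2 : ∀ k, MemLp (φ k) 2 (muI a b))
    (hφON : ∀ i j, ∫ x, star (φ i x) * φ j x ∂(muI a b) = if i = j then 1 else 0)
    (h : Fin n → ℝ → ℝ)
    (hhmeas : ∀ k, Measurable (h k))
    (hhbdd : ∀ k, ∃ C : ℝ, ∀ᵐ y ∂(muI c d), |h k y| ≤ C)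
    (m : ℕ) (hm : 1 ≤ m)
    (ψ : Fin m → ℝ → ℂ)
    (hψL2 : ∀ j, MemLp (ψ j) 2 (muI c d))
    (hψON : ∀ i j, ∫ y, star (ψ i y) * ψ j y ∂(muI c d) = if i = j then 1 else 0)
    (p : Fin m → ℝ → ℝ)
    (hpmeas : ∀ j, Measurable (p j))
    (hpbdd : ∀ j, ∃ C : ℝ, ∀ᵐ x ∂(muI a b), |p j x| ≤ C)
    (T1 T2 : Lp ℂ 2 ((muI a b).prod (muI c d)) →L[ℂ] Lp ℂ 2 ((muI a b).prod (muI c d)))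
    (hT1sa : IsSelfAdjoint T1) (hT2sa : IsSelfAdjoint T2)
    (hT1 : ∀ f : Lp ℂ 2 ((muI a b).prod (muI c d)),
      ∀ᵐ z ∂((muI a b).prod (muI c d)),
        T1 f z = ∫ s, (∑ k, φ k z.1 * star (φ k s) * (h k z.2 : ℂ)) * f (s, z.2) ∂(muI a b))
    (hT2 : ∀ f : Lp ℂ 2 ((muI a b).prod (muI c d)),
      ∀ᵐ z ∂((muI a b).prod (muI c d)),
        T2 f z = ∫ t, (∑ j, (p j z.1 : ℂ) * ψ j z.2 * star (ψ j t)) * f (z.1, t) ∂(muI c d))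
    -- the orthogonal projections `P k`
    (P : Fin n → (Lp ℂ 2 ((muI a b).prod (muI c d)) →L[ℂ] Lp ℂ 2 ((muI a b).prod (muI c d))))
    (hP : ∀ k, ∀ f : Lp ℂ 2 ((muI a b).prod (muI c d)),
      ∀ᵐ z ∂((muI a b).prod (muI c d)),
        P k f z = φ k z.1 * ∫ s, star (φ k s) * f (s, z.2) ∂(muI a b))
    -- the point lam in G = ℂ \ (σ(T₁) ∪ σ(T₂))
    (lam : ℂ) (hlam : lam ∉ spectrum ℂ T1 ∪ spectrum ℂ T2)
    -- the operator S₁(1/lam)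
    (S1 : Lp ℂ 2 ((muI a b).prod (muI c d)) →L[ℂ] Lp ℂ 2 ((muI a b).prod (muI c d)))
    (hS1 : ∀ f : Lp ℂ 2 ((muI a b).prod (muI c d)),
      ∀ᵐ z ∂((muI a b).prod (muI c d)),
        S1 f z = ∑ k, ((h k z.2 : ℂ) / (1 - lam⁻¹ * (h k z.2 : ℂ))) * P k f z)
    -- the operator W₁(1/lam) = (E - (1/lam)T₂)⁻¹ S₁(1/lam) T₂
    (W1 : Lp ℂ 2 ((muI a b).prod (muI c d)) →L[ℂ] Lp ℂ 2 ((muI a b).prod (muI c d)))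
    (hW1 : (1 - lam⁻¹ • T2) * W1 = S1 * T2)
    -- the functions F_ω(x, y; lam) for ω = (k, j) ∈ Γ = {1,…,m} × {1,…,n}
    (F : Fin m × Fin n → ℝ → ℝ → ℂ)
    (hF : ∀ ω x y, F ω x y =
      φ ω.2 x * (ψ ω.1 y * (h ω.2 y : ℂ) / (lam - (h ω.2 y : ℂ)) +
        ∑ i, ((p i x : ℂ) * ψ i y / (lam - (p i x : ℂ))) *
          ∫ ξ, ((h ω.2 ξ : ℂ) / (lam - (h ω.2 ξ : ℂ))) * ψ ω.1 ξ * star (ψ i ξ) ∂(muI c d)))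
    -- the functions B_ω(s, t)
    (B : Fin m × Fin n → ℝ → ℝ → ℂ)
    (hB : ∀ ω s t, B ω s t = (p ω.1 s : ℂ) * star (φ ω.2 s) * star (ψ ω.1 t))
    -- the numbers Π_{ω,ω'}(lam)
    (Pmat : Fin m × Fin n → Fin m × Fin n → ℂ)
    (hPmat : ∀ ω ω', Pmat ω ω' =
      ∫ x, (∫ y, F ω x y * B ω' x y ∂(muI c d)) ∂(muI a b))
    -- the determinant Δ(lam)
    (Δ : ℂ)
    (hΔ : Δ = Matrix.det
      (Matrix.of fun ω ω' : Fin m × Fin n => Pmat ω ω' - if ω = ω' then lam else 0)) :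
    (∃ f : Lp ℂ 2 ((muI a b).prod (muI c d)),
      f ≠ 0 ∧ f - (lam ^ 2)⁻¹ • W1 f = 0) ↔ Δ = 0 := by
  have hl1 : lam ∉ spectrum ℂ T1 := fun hh => hlam (Or.inl hh)
  have hl2 : lam ∉ spectrum ℂ T2 := fun hh => hlam (Or.inr hh)
  have hl0 : lam ≠ 0 := lam_ne hab hcd hφL2 hT1 hl1
  have hpmul : ∀ j (u : ℝ → ℂ), MemLp u 2 (muI a b) →
      MemLp (fun x => (p j x : ℂ) * u x) 2 (muI a b) := by
    intro j u hu
    obtain ⟨C, hC⟩ := hpbdd j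
    have := hpmeas j
    refine bmul (C := C) (by fun_prop) ?_ hu
    filter_upwards [hC] with x hx
    simpa using hx
  have quot : ∀ (ρ : Measure ℝ) [IsFiniteMeasure ρ] (q : ℝ → ℝ), Measurable q →
      (∃ C : ℝ, ∀ᵐ x ∂ρ, |q x| ≤ C) → (∃ δ : ℝ, 0 < δ ∧ ∀ᵐ x ∂ρ, δ ≤ ‖lam - (q x : ℂ)‖) →
      ∀ u : ℝ → ℂ, MemLp u 2 ρ → MemLp (fun x => (q x : ℂ) / (lam - q x) * u x) 2 ρ := by
    rintro ρ _ q hq ⟨C, hC⟩ ⟨δ, hδ, hD⟩ u hu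
    have hm : Measurable (fun x => (q x : ℂ) / (lam - q x)) := by fun_prop
    refine bmul (C := C / δ) hm.aestronglyMeasurable ?_ hu
    filter_upwards [hC, hD] with x h1 h2
    rw [norm_div, Complex.norm_real, Real.norm_eq_abs]
    exact div_le_div₀ ((abs_nonneg _).trans h1) h1 hδ h2
  have hplow := fun j => p_lower hψL2 hψON hpmeas hpbdd hT2 hl2 j
  have hhlow := fun j => h_lower hφL2 hφON hhmeas hhbdd hT1 hl1 j
  have hr : ∀ (j : Fin n) (i : Fin m),
      MemLp (fun x => (p i x : ℂ) / (lam - p i x) * φ j x) 2 (muI a b) := fun j i =>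
    quot _ (p i) (hpmeas i) (hpbdd i) (hplow i) _ (hφL2 j)
  have hg : ∀ (ω : Fin m × Fin n),
      MemLp (fun y => (h ω.2 y : ℂ) / (lam - h ω.2 y) * ψ ω.1 y) 2 (muI c d) := fun ω =>
    quot _ (h ω.2) (hhmeas _) (hhbdd _) (hhlow _) _ (hψL2 _)
  have hpne : ∀ j, ∀ᵐ x ∂(muI a b), lam - (p j x : ℂ) ≠ 0 := by
    intro j
    obtain ⟨δ, hδ, hD⟩ := hplow j
    filter_upwards [hD] with x hx h0
    rw [h0, norm_zero] at hx
    linarith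
  have hhne : ∀ j, ∀ᵐ y ∂(muI c d), lam - (h j y : ℂ) ≠ 0 := by
    intro j
    obtain ⟨δ, hδ, hD⟩ := hhlow j
    filter_upwards [hD] with x hx h0
    rw [h0, norm_zero] at hx
    linarith
  let G : Fin m × Fin n → Lp ℂ 2 ((muI a b).prod (muI c d)) := fun ω => tens (hφL2 ω.2) (hg ω)
  let cc : Fin m × Fin n → Fin m → ℂ := fun ω i =>
    ∫ t, star (ψ i t) * ((h ω.2 t : ℂ) / (lam - h ω.2 t) * ψ ω.1 t) ∂(muI c d)
  let FL : Fin m × Fin n → Lp ℂ 2 ((muI a b).prod (muI c d)) := fun ω =>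
    tens (hφL2 ω.2) (hg ω) + ∑ i, cc ω i • tens (hr ω.2 i) (hψL2 i)
  let BL : Fin m × Fin n → Lp ℂ 2 ((muI a b).prod (muI c d)) := fun ω =>
    tens (hpmul ω.1 _ (hφL2 ω.2)) (hψL2 ω.1)
  have hDF : ∀ ω, lam • FL ω - T2 (FL ω) = lam • G ω := fun ω =>
    F_eq hψL2 hψON hT2 hpne hpmul (hφL2 ω.2) (hg ω) (hr ω.2) (FL ω) rfl
  -- `FL` represents `F`
  have hFL : ∀ ω, ∀ᵐ z ∂((muI a b).prod (muI c d)), FL ω z = F ω z.1 z.2 := by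
    intro ω
    have h3 : ∀ᵐ z ∂((muI a b).prod (muI c d)), ∀ i, tens (hr ω.2 i) (hψL2 i) z =
        ((p i z.1 : ℂ) / (lam - p i z.1) * φ ω.2 z.1) * ψ i z.2 := by
      rw [ae_all_iff]
      exact fun i => tens_ae _ _
    filter_upwards [Lp.coeFn_add (tens (hφL2 ω.2) (hg ω))
      (∑ i, cc ω i • tens (hr ω.2 i) (hψL2 i)), tens_ae (hφL2 ω.2) (hg ω), h3,
      lp_sum_smul (cc ω) (fun i => tens (hr ω.2 i) (hψL2 i))] with z h1 h2 h3 h4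
    change (tens (hφL2 ω.2) (hg ω) + ∑ i, cc ω i • tens (hr ω.2 i) (hψL2 i) :
      Lp ℂ 2 ((muI a b).prod (muI c d))) z = _
    rw [h1, Pi.add_apply, h2, h4, hF, mul_add, Finset.mul_sum]
    congr 1
    · ring
    · refine Finset.sum_congr rfl fun i _ => ?_
      rw [h3]
      have : cc ω i = ∫ ξ, ((h ω.2 ξ : ℂ) / (lam - (h ω.2 ξ : ℂ))) * ψ ω.1 ξ * star (ψ i ξ)
          ∂(muI c d) := by
        refine integral_congr_ae (Filter.Eventually.of_forall fun t => ?_)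
        simp only
        ring
      rw [← this]
      ring
  have hPm : ∀ ω ω', Pmat ω ω' = inner ℂ (BL ω') (FL ω) := by
    intro ω ω'
    rw [hPmat, inner_tens, integral_prod _
      (inner_integrable (hpmul ω'.1 _ (hφL2 ω'.2)) (hψL2 ω'.1) (FL ω))]
    refine integral_congr_ae ?_
    filter_upwards [Measure.ae_ae_of_ae_prod (hFL ω)] with x hx
    refine integral_congr_ae ?_
    filter_upwards [hx] with y hy
    rw [hy, hB]
    simp
    ring
  have hST : ∀ f, S1 (T2 f) = lam • ∑ ω, inner ℂ (BL ω) f • G ω := by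
    intro f
    refine Lp.ext ?_
    have hPa : ∀ᵐ z ∂((muI a b).prod (muI c d)), ∀ k, P k (T2 f) z =
        ∑ j, inner ℂ (BL (j, k)) f * (φ k z.1 * ψ j z.2) := by
      rw [ae_all_iff]
      exact fun k => PT2 hψL2 hT2 (fun j => hpmul j _ (hφL2 k)) (hP k) f
    have hGa : ∀ᵐ z ∂((muI a b).prod (muI c d)), ∀ ω, G ω z =
        φ ω.2 z.1 * ((h ω.2 z.2 : ℂ) / (lam - h ω.2 z.2) * ψ ω.1 z.2) := by
      rw [ae_all_iff]
      exact fun ω => tens_ae _ _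
    have hna : ∀ᵐ z ∂((muI a b).prod (muI c d)), ∀ j, lam - (h j z.2 : ℂ) ≠ 0 := by
      rw [ae_all_iff]
      exact fun j => Measure.quasiMeasurePreserving_snd.ae (hhne j)
    filter_upwards [hS1 (T2 f), hPa, hGa, hna,
      Lp.coeFn_smul lam (∑ ω, inner ℂ (BL ω) f • G ω),
      lp_sum_smul (fun ω => inner ℂ (BL ω) f) G] with z h1 h2 h3 h4 h5 h6
    rw [h1, h5, Pi.smul_apply, h6, smul_eq_mul, Fintype.sum_prod_type_right, Finset.mul_sum]
    refine Finset.sum_congr rfl fun k _ => ?_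
    rw [h2, Finset.mul_sum, Finset.mul_sum]
    refine Finset.sum_congr rfl fun j _ => ?_
    rw [h3]
    have e : (h k z.2 : ℂ) / (1 - lam⁻¹ * (h k z.2 : ℂ)) =
        lam * ((h k z.2 : ℂ) / (lam - h k z.2)) := by
      have h7 : (1 - lam⁻¹ * (h k z.2 : ℂ)) = lam⁻¹ * (lam - h k z.2) := by
        field_simp
      rw [h7]
      have := h4 k
      field_simp
    rw [e]
    ring
  obtain ⟨δ, hδ, hlow⟩ := lower_of_spec hl2
  have hW : ∀ f, W1 f = lam • ∑ ω, inner ℂ (BL ω) f • FL ω := by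
    intro f
    have e1 : lam • W1 f - T2 (W1 f) = lam • S1 (T2 f) := by
      have := congrArg (fun L : Lp ℂ 2 ((muI a b).prod (muI c d)) →L[ℂ]
        Lp ℂ 2 ((muI a b).prod (muI c d)) => lam • L f) hW1
      simpa [smul_sub, smul_smul, hl0] using this
    set X := ∑ ω, inner ℂ (BL ω) f • FL ω with hX
    have e2 : lam • X - T2 X = lam • ∑ ω, inner ℂ (BL ω) f • G ω := by
      rw [hX, map_sum, Finset.smul_sum, Finset.smul_sum, ← Finset.sum_sub_distrib]
      refine Finset.sum_congr rfl fun ω _ => ?_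
      rw [map_smul, smul_comm lam, ← smul_sub, hDF, smul_comm lam]
    have e3 : lam • (W1 f - lam • X) - T2 (W1 f - lam • X) = 0 := by
      have : lam • (W1 f - lam • X) - T2 (W1 f - lam • X) =
          (lam • W1 f - T2 (W1 f)) - lam • (lam • X - T2 X) := by
        rw [map_sub, map_smul, smul_sub, smul_sub]
        abel
      rw [this, e1, hST, e2, sub_self]
    have h1 := hlow (W1 f - lam • X)
    rw [e3, norm_zero] at h1
    have h2 : ‖W1 f - lam • X‖ = 0 := by nlinarith [norm_nonneg (W1 f - lam • X)]
    exact sub_eq_zero.1 (norm_eq_zero.1 h2)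
  rw [hΔ, ← final_alg hl0 (fun ω => (innerSL ℂ (BL ω)).toLinearMap) FL Pmat
    (fun ω ω' => by rw [hPm]; rfl)]
  refine exists_congr fun f => and_congr_right fun _ => ?_
  have e : f - (lam ^ 2)⁻¹ • W1 f = lam⁻¹ • (lam • f - ∑ ω, inner ℂ (BL ω) f • FL ω) := by
    rw [hW, smul_sub, smul_smul, smul_smul, inv_mul_cancel₀ hl0, one_smul]
    congr 2
    field_simp
  rw [e, smul_eq_zero_iff_right (inv_ne_zero hl0), sub_eq_zero]
  rfl
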